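/- If continuous real-valued functions are dense in N¹X with respect to the quasi-seminorm ‖·‖_{N¹X}, then every u ∈ N¹X has a quasi-continuous representative ũ ∈ N¹X with ũ = u quasi-everywhere; in particular, every u ∈ N¹X is weakly quasi-continuous. -/

import Mathlib

/-!
Pick continuous `f k` with `‖u - f k‖_{N¹X} < ε k`, where `ε k = 4⁻ᵏ (2c)⁻⁽ᵏ⁺¹⁾` and `c` is the
modulus of concavity, and upper gradients `g k` of `v k = u - f k` with `‖g k‖_X < ε k`.
By the Riesz–Fischer property the tails `∑_{k ≥ n} 4ᵏ |v k|` and `∑_{k ≥ n} 4ᵏ g k` have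
quasi-norm at most `2⁻ⁿ` (`QBFL.nrmE_tail_le`).

Let `badSet n` be the set where `u` is infinite or `|v k| > 2⁻ᵏ` for some `k ≥ n`. The function
`min 1 (sup_{k ≥ n} 4ᵏ |v k|)` equals `1` on `badSet n` and has `∑_{k ≥ n} 4ᵏ g k` as an upper
gradient, so `badSet n` has capacity at most `2 · 2⁻ⁿ` (`QBFL.cap_badSet_le`); working with a
supremum truncated at `1` keeps the test function finite. The open set `jumpSet n`, where
`|f (k+1) - f k| > 2 · 2⁻ᵏ` for some `k ≥ n`, lies inside `badSet n`, and off it `f k` converges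
uniformly. Hence `ũ = limsup f k` is quasi-continuous. Off `badSet n` one has `ũ = u`, which
gives both `ũ = u` quasi-everywhere and the weak quasi-continuity of `u`.

It remains to see that `ũ ∈ N¹X`. Put `T = ∑ 4ᵏ |v k|` and `R = ∑ 4ᵏ g k`. The set `{T = ∞}` is
null and contains the exceptional set `N = ⋂ badSet n`. If `g₀` is an upper gradient of `u`, then
`g₀ + R`, changed to `∞` on `{T = ∞}`, is an upper gradient of `ũ`: along a curve starting at
`x ∈ N`, either every interior point lies in `{T = ∞}`, or some point `y` on it has `T y < ∞`, and
then `2ᵏ ≤ 4ᵏ |v k x| ≤ T y + ∫ R` for infinitely many `k`, so that `∫ R = ∞`.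
-/

open MeasureTheory Filter Set Topology Metric ENNReal

noncomputable section

/-- A (non-constant, rectifiable) curve in `P`, parametrized by arc length. -/
structure Curve (P : Type*) [PseudoMetricSpace P] where
  len : ℝ
  len_pos : 0 < len
  toFun : ℝ → P
  lip : LipschitzOnWith 1 toFun (Set.Icc 0 len)

variable {P : Type*}

/-- The curve integral `∫_γ ρ ds`. -/
def curveLint [PseudoMetricSpace P] (γ : Curve P) (ρ : P → ℝ≥0∞) : ℝ≥0∞ :=
  ∫⁻ t in Set.Icc (0 : ℝ) γ.len, ρ (γ.toFun t)

/-- `g` is an upper gradient of `u`. -/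
def IsUpperGradient [PseudoMetricSpace P] [MeasurableSpace P]
    (u : P → EReal) (g : P → ℝ≥0∞) : Prop :=
  Measurable g ∧
    ∀ γ : Curve P, (u (γ.toFun 0) - u (γ.toFun γ.len)).abs ≤ curveLint γ g

/-- A quasi-Banach function lattice over `(P, μ)` with continuous quasi-norm. -/
structure QBFL (P : Type*) [MeasurableSpace P] (μ : MeasureTheory.Measure P) where
  nrm : (P → EReal) → ℝ≥0∞
  cc : ℝ≥0∞
  one_le_cc : 1 ≤ cc
  cc_lt_top : cc < ⊤
  nrm_eq_zero_iff : ∀ u : P → EReal, Measurable u → (nrm u = 0 ↔ u =ᵐ[μ] 0)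
  nrm_smul : ∀ (a : ℝ) (u : P → EReal),
    nrm (fun x => (a : EReal) * u x) = ENNReal.ofReal |a| * nrm u
  nrm_triangle : ∀ u v : P → EReal,
    nrm (fun x => u x + v x) ≤ cc * (nrm u + nrm v)
  nrm_mono : ∀ u v : P → EReal, (∀ᵐ x ∂μ, (u x).abs ≤ (v x).abs) → nrm u ≤ nrm v
  nrm_rieszFischer : ∀ f : ℕ → P → EReal, (∀ n, ∀ᵐ x ∂μ, 0 ≤ f n x) →
    nrm (fun x => ∑' n, f n x) ≤ ∑' n, cc ^ (n + 1) * nrm (f n)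
  nrm_continuous : ∀ (f : ℕ → P → EReal) (u : P → EReal),
    Tendsto (fun n => nrm fun x => f n x - u x) atTop (𝓝 0) →
    Tendsto (fun n => nrm (f n)) atTop (𝓝 (nrm u))

variable [MetricSpace P] [MeasurableSpace P] {μ : MeasureTheory.Measure P}

/-- The quasi-norm applied to a `ℝ≥0∞`-valued function. -/
def QBFL.nrmE (X : QBFL P μ) (g : P → ℝ≥0∞) : ℝ≥0∞ :=
  X.nrm fun x => (g x : EReal)

/-- The Newtonian quasi-seminorm `‖u‖_{N¹X}`. -/
def QBFL.newt (X : QBFL P μ) (u : P → EReal) : ℝ≥0∞ :=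
  X.nrm u + ⨅ g ∈ {g : P → ℝ≥0∞ | IsUpperGradient u g}, X.nrmE g

/-- Membership in the Newtonian space `N¹X`. -/
def QBFL.memN1 (X : QBFL P μ) (u : P → EReal) : Prop :=
  Measurable u ∧ X.newt u < ⊤

/-- The Sobolev capacity `C_X`. -/
def QBFL.cap (X : QBFL P μ) (E : Set P) : ℝ≥0∞ :=
  ⨅ u ∈ {u : P → EReal | X.memN1 u ∧ ∀ x ∈ E, 1 ≤ u x}, X.newt u


/-- `u` is weakly quasi-continuous: for every `ε > 0` there is a set `E` of capacity
less than `ε` such that the restriction of `u` to the complement of `E` is finite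
and continuous. -/
def QBFL.WeaklyQC (X : QBFL P μ) (u : P → EReal) : Prop :=
  ∀ ε : ℝ≥0∞, 0 < ε → ∃ E : Set P, X.cap E < ε ∧
    (∀ x ∈ Eᶜ, u x ≠ ⊤ ∧ u x ≠ ⊥) ∧ ContinuousOn u Eᶜ

/-- `u` is quasi-continuous: the exceptional set can moreover be chosen open. -/
def QBFL.QC (X : QBFL P μ) (u : P → EReal) : Prop :=
  ∀ ε : ℝ≥0∞, 0 < ε → ∃ E : Set P, IsOpen E ∧ X.cap E < ε ∧
    (∀ x ∈ Eᶜ, u x ≠ ⊤ ∧ u x ≠ ⊥) ∧ ContinuousOn u Eᶜ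

set_option linter.unusedSectionVars false

/-! ### Extended real arithmetic -/

theorem measurable_ereal_abs : Measurable EReal.abs := by
  apply EReal.measurable_of_measurable_real
  exact ENNReal.measurable_ofReal.comp measurable_norm

theorem ereal_abs_coe_ennreal (a : ℝ≥0∞) : ((a : EReal)).abs = a := by
  induction a using ENNReal.recTopCoe with
  | top => simp
  | coe a =>
    change ENNReal.ofReal |(a : ℝ)| = a
    simp

/-- This holds with no finiteness assumption because `(±∞) - (±∞)` has absolute value `∞`. -/
theorem ereal_abs_le_add_abs_sub (a b : EReal) : a.abs ≤ b.abs + (a - b).abs := by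
  induction a using EReal.rec with
  | bot => simp
  | top => induction b using EReal.rec <;> simp
  | coe a =>
    induction b using EReal.rec with
    | bot => simp
    | top => simp
    | coe b =>
      rw [← EReal.coe_sub, EReal.abs_def, EReal.abs_def, EReal.abs_def,
        ← ENNReal.ofReal_add (abs_nonneg _) (abs_nonneg _)]
      apply ENNReal.ofReal_le_ofReal
      have := abs_add_le b (a - b)
      simpa using this

theorem ereal_abs_coe_sub_coe_le {p q I : ℝ≥0∞} (hp : p ≤ 1) (hq : q ≤ 1)
    (h1 : p ≤ q + I) (h2 : q ≤ p + I) : ((p : EReal) - (q : EReal)).abs ≤ I := by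
  lift p to NNReal using (hp.trans_lt ENNReal.one_lt_top).ne
  lift q to NNReal using (hq.trans_lt ENNReal.one_lt_top).ne
  induction I using ENNReal.recTopCoe with
  | top => simp
  | coe I =>
    have h1' : (p : ℝ) ≤ q + I := by exact_mod_cast h1
    have h2' : (q : ℝ) ≤ p + I := by exact_mod_cast h2
    change (((p : ℝ) : EReal) - ((q : ℝ) : EReal)).abs ≤ I
    rw [← EReal.coe_sub, EReal.abs_def, ENNReal.ofReal_le_iff_le_toReal ENNReal.coe_ne_top]
    rw [abs_le]
    constructor <;> simp <;> linarith

theorem ereal_coe_tsum (f : ℕ → ℝ≥0∞) :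
    ((∑' n, f n : ℝ≥0∞) : EReal) = ∑' n, (f n : EReal) := by
  let φ : ℝ≥0∞ →+ EReal :=
    { toFun := fun a => (a : EReal), map_zero' := rfl, map_add' := EReal.coe_ennreal_add }
  exact (ENNReal.summable.hasSum.map φ continuous_coe_ennreal_ereal).tsum_eq.symm

/-! ### Curves -/

section Curves

/-- The initial piece of a curve, of length `t`. -/
def Curve.initial (γ : Curve P) (t : ℝ) (h0 : 0 < t) (ht : t ≤ γ.len) : Curve P where
  len := t
  len_pos := h0
  toFun := γ.toFun
  lip := γ.lip.mono (Icc_subset_Icc le_rfl ht)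

/-- The curve run backwards. -/
def Curve.reverse (γ : Curve P) : Curve P where
  len := γ.len
  len_pos := γ.len_pos
  toFun t := γ.toFun (γ.len - t)
  lip := by
    intro s hs t ht
    have h := γ.lip (x := γ.len - s) ⟨by linarith [hs.2], by linarith [hs.1]⟩
      (y := γ.len - t) ⟨by linarith [ht.2], by linarith [ht.1]⟩
    simpa [edist_sub_left] using h

theorem curveLint_reverse (γ : Curve P) (ρ : P → ℝ≥0∞) :
    curveLint γ.reverse ρ = curveLint γ ρ := by
  unfold curveLint Curve.reverse
  have h := (Measure.measurePreserving_sub_left (volume : Measure ℝ) γ.len)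
    |>.setLIntegral_comp_preimage_emb
      (MeasurableEquiv.subLeft γ.len).measurableEmbedding
      (fun t => ρ (γ.toFun t)) (Icc 0 γ.len)
  simpa using h

theorem curveLint_mono (γ : Curve P) {ρ σ : P → ℝ≥0∞} (h : ∀ x, ρ x ≤ σ x) :
    curveLint γ ρ ≤ curveLint γ σ :=
  lintegral_mono fun _ => h _

theorem mul_curveLint_le (γ : Curve P) (a : ℝ≥0∞) (ρ : P → ℝ≥0∞) :
    a * curveLint γ ρ ≤ curveLint γ (fun x => a * ρ x) :=
  lintegral_const_mul_le a _

end Curves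

/-! ### Quasi-norms and capacity -/

namespace QBFL

variable (X : QBFL P μ)

theorem nrmE_abs (v : P → EReal) : X.nrmE (fun x => (v x).abs) = X.nrm v :=
  le_antisymm
    (X.nrm_mono _ _ (Eventually.of_forall fun _ => (ereal_abs_coe_ennreal _).le))
    (X.nrm_mono _ _ (Eventually.of_forall fun _ => (ereal_abs_coe_ennreal _).ge))

theorem nrmE_mono {g h : P → ℝ≥0∞} (H : ∀ᵐ x ∂μ, g x ≤ h x) : X.nrmE g ≤ X.nrmE h := by
  apply X.nrm_mono
  filter_upwards [H] with x hx
  simpa [ereal_abs_coe_ennreal] using hx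

theorem nrmE_const_mul (m : ℝ) (hm : 0 ≤ m) (g : P → ℝ≥0∞) :
    X.nrmE (fun x => ENNReal.ofReal m * g x) = ENNReal.ofReal m * X.nrmE g := by
  unfold nrmE
  have h := X.nrm_smul m (fun x => (g x : EReal))
  rw [abs_of_nonneg hm] at h
  rw [← h]
  congr 1
  funext x
  rw [EReal.coe_ennreal_mul, EReal.coe_ennreal_ofReal, max_eq_left hm]

/-- The admissible error `4⁻ᵏ (2c)⁻⁽ᵏ⁺¹⁾` of the `k`-th approximation: it absorbs the weight `4ᵏ`
and the powers of the modulus of concavity in the Riesz–Fischer property. -/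
def err (k : ℕ) : ℝ≥0∞ := (4 ^ k)⁻¹ * ((2 * X.cc) ^ (k + 1))⁻¹

theorem err_pos (k : ℕ) : 0 < X.err k := by
  unfold err
  apply ENNReal.mul_pos
  · exact ENNReal.inv_ne_zero.2 (ENNReal.pow_ne_top (by simp))
  · exact ENNReal.inv_ne_zero.2
      (ENNReal.pow_ne_top (ENNReal.mul_ne_top (by simp) X.cc_lt_top.ne))

theorem cc_pow_mul_err_le (n j : ℕ) :
    X.cc ^ (j + 1) * (4 ^ (n + j) * X.err (n + j)) ≤ 2⁻¹ ^ n * 2⁻¹ ^ (j + 1) := by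
  unfold err
  rw [← mul_assoc (4 ^ (n + j)), ENNReal.mul_inv_cancel (by simp) (ENNReal.pow_ne_top (by simp)),
    one_mul, mul_pow, ENNReal.mul_inv (by simp) (by simp), mul_left_comm]
  calc _ ≤ ((2 : ℝ≥0∞) ^ (n + j + 1))⁻¹ * 1 := by
        refine mul_le_mul' le_rfl ?_
        rw [← div_eq_mul_inv]
        apply ENNReal.div_le_of_le_mul
        rw [one_mul]
        exact pow_le_pow_right₀ X.one_le_cc (by omega)
    _ = _ := by rw [mul_one, ENNReal.inv_pow, add_assoc, pow_add]

theorem nrmE_tail_le (h : ℕ → P → ℝ≥0∞) (hh : ∀ k, X.nrmE (h k) ≤ X.err k) (n : ℕ) :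
    X.nrmE (fun x => ∑' j, 4 ^ (n + j) * h (n + j) x) ≤ 2⁻¹ ^ n := by
  have h1 := X.nrm_rieszFischer (fun j x => ((4 ^ (n + j) * h (n + j) x : ℝ≥0∞) : EReal))
    (fun j => Eventually.of_forall fun x => EReal.coe_ennreal_nonneg _)
  have h2 : X.nrmE (fun x => ∑' j, 4 ^ (n + j) * h (n + j) x) ≤
      ∑' j, X.cc ^ (j + 1) * X.nrmE (fun x => 4 ^ (n + j) * h (n + j) x) := by
    unfold nrmE
    simpa only [ereal_coe_tsum] using h1
  refine h2.trans ?_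
  calc _ ≤ ∑' j : ℕ, (2⁻¹ : ℝ≥0∞) ^ n * 2⁻¹ ^ (j + 1) := by
        refine ENNReal.tsum_le_tsum fun j => ?_
        refine le_trans ?_ (X.cc_pow_mul_err_le n j)
        have h3 := X.nrmE_const_mul (4 ^ (n + j)) (by positivity) (h (n + j))
        have h4 : ENNReal.ofReal (4 ^ (n + j)) = 4 ^ (n + j) := by
          rw [ENNReal.ofReal_pow (by norm_num)]; simp
        rw [h4] at h3
        rw [h3]
        gcongr
        exact hh _
    _ = 2⁻¹ ^ n := by
        rw [ENNReal.tsum_mul_left, ENNReal.tsum_geometric_add_one, ENNReal.one_sub_inv_two,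
          inv_inv, ENNReal.inv_mul_cancel (by simp) (by simp), mul_one]

/-- A function of finite quasi-norm is finite a.e.: the function `∞ · 1_{T = ∞}` is equal to its
double and has finite quasi-norm, hence quasi-norm zero. -/
theorem ae_ne_top {T : P → ℝ≥0∞} (hT : Measurable T) (hfin : X.nrmE T < ⊤) :
    ∀ᵐ x ∂μ, T x ≠ ⊤ := by
  classical
  let φ : P → ℝ≥0∞ := fun x => if T x = ⊤ then ⊤ else 0
  have hφm : Measurable φ :=
    Measurable.ite (hT (measurableSet_singleton ⊤)) measurable_const measurable_const
  have hφle : X.nrmE φ ≤ X.nrmE T := by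
    refine X.nrmE_mono (Eventually.of_forall fun x => ?_)
    by_cases h : T x = ⊤ <;> simp [φ, h]
  have hdouble : X.nrmE φ = 2 * X.nrmE φ := by
    have h := X.nrmE_const_mul 2 (by norm_num) φ
    rw [ENNReal.ofReal_ofNat] at h
    rw [← h]
    congr 1
    funext x
    by_cases h : T x = ⊤ <;> simp [φ, h]
  have hzero : X.nrmE φ = 0 := by
    have hne : X.nrmE φ ≠ ⊤ := (hφle.trans_lt hfin).ne
    by_contra h0
    rw [two_mul] at hdouble
    exact (ENNReal.lt_add_right hne h0).ne hdouble
  have hae := (X.nrm_eq_zero_iff _ (measurable_coe_ennreal_ereal.comp hφm)).1 hzero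
  filter_upwards [hae] with x hx hTx
  simp [φ, hTx] at hx

theorem cap_mono {E F : Set P} (h : E ⊆ F) : X.cap E ≤ X.cap F :=
  biInf_mono fun _ hw => ⟨hw.1, fun x hx => hw.2 x (h hx)⟩

theorem newt_le {w : P → EReal} {g : P → ℝ≥0∞} (hg : IsUpperGradient w g) :
    X.newt w ≤ X.nrm w + X.nrmE g := by
  unfold newt
  gcongr
  exact biInf_le _ hg

theorem exists_upperGradient_lt {w : P → EReal} {a : ℝ≥0∞} (h : X.newt w < a) :
    X.nrm w < a ∧ ∃ g, IsUpperGradient w g ∧ X.nrmE g < a := by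
  refine ⟨lt_of_le_of_lt le_self_add h, ?_⟩
  have h2 := lt_of_le_of_lt le_add_self h
  simpa [iInf_lt_iff] using h2

end QBFL

/-! ### The exceptional sets -/

/-- The set where `u` is infinite or `|u - f k| > 2⁻ᵏ` for some `k ≥ n`. -/
def badSet (u : P → EReal) (f : ℕ → P → ℝ) (n : ℕ) : Set P :=
  {x | ¬ ∃ a : ℝ, u x = a ∧ ∀ k ≥ n, |a - f k x| ≤ (1 / 2) ^ k}

/-- The set where `|f (k+1) - f k| > 2 · 2⁻ᵏ` for some `k ≥ n`. -/
def jumpSet (f : ℕ → P → ℝ) (n : ℕ) : Set P :=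
  {x | ∃ k ≥ n, 2 * (1 / 2) ^ k < |f (k + 1) x - f k x|}

/-- The pointwise upper limit of the real functions `f k`, as an extended real function. -/
def limFun (f : ℕ → P → ℝ) (x : P) : EReal := limsup (fun k => (f k x : EReal)) atTop

section Sets

variable {u : P → EReal} {f : ℕ → P → ℝ}

theorem jumpSet_subset_badSet (n : ℕ) : jumpSet f n ⊆ badSet u f n := by
  rintro x ⟨k, hk, hlt⟩ ⟨a, -, ha⟩
  have h1 := abs_le.1 (ha k hk)
  have h2 := abs_le.1 (ha (k + 1) (by omega))
  have h3 : ((1 : ℝ) / 2) ^ (k + 1) ≤ (1 / 2) ^ k :=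
    pow_le_pow_of_le_one (by norm_num) (by norm_num) (by omega)
  refine absurd hlt (not_lt.2 (abs_le.2 ⟨?_, ?_⟩)) <;> linarith [h1.1, h1.2, h2.1, h2.2]

theorem isOpen_jumpSet (hf : ∀ k, Continuous (f k)) (n : ℕ) : IsOpen (jumpSet f n) := by
  have : jumpSet f n = ⋃ k, ⋃ (_ : k ≥ n), {x | 2 * (1 / 2) ^ k < |f (k + 1) x - f k x|} := by
    ext x; simp [jumpSet]
  rw [this]
  exact isOpen_iUnion fun k => isOpen_iUnion fun _ =>
    isOpen_lt continuous_const ((hf (k + 1)).sub (hf k)).abs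

theorem exists_le_of_mem_badSet {n : ℕ} {x : P} (hx : x ∈ badSet u f n) :
    ∃ k ≥ n, (2 : ℝ≥0∞) ^ k ≤ 4 ^ k * (u x - (f k x : EReal)).abs := by
  unfold badSet at hx
  by_cases hfin : ∃ a : ℝ, u x = a
  · obtain ⟨a, ha⟩ := hfin
    have hx' : ¬ ∀ k ≥ n, |a - f k x| ≤ (1 / 2) ^ k := fun h => hx ⟨a, ha, h⟩
    push Not at hx'
    obtain ⟨k, hk, hlt⟩ := hx'
    refine ⟨k, hk, ?_⟩
    have e2 : (2 : ℝ≥0∞) ^ k = ENNReal.ofReal (2 ^ k) := by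
      rw [ENNReal.ofReal_pow (by norm_num)]; simp
    have e4 : (4 : ℝ≥0∞) ^ k = ENNReal.ofReal (4 ^ k) := by
      rw [ENNReal.ofReal_pow (by norm_num)]; simp
    rw [ha, ← EReal.coe_sub, EReal.abs_def, e2, e4, ← ENNReal.ofReal_mul (by positivity)]
    apply ENNReal.ofReal_le_ofReal
    calc (2 : ℝ) ^ k = 4 ^ k * (1 / 2) ^ k := by rw [← mul_pow]; norm_num
      _ ≤ _ := by gcongr
  · refine ⟨n, le_rfl, ?_⟩
    have : (u x - (f n x : EReal)).abs = ⊤ := by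
      induction h : u x using EReal.rec with
      | bot => simp
      | top => simp
      | coe a => exact absurd ⟨a, h⟩ hfin
    rw [this, ENNReal.mul_top (by simp)]
    exact le_top

theorem limFun_eq_of_tendsto {x : P} {a : ℝ} (h : Tendsto (fun k => f k x) atTop (𝓝 a)) :
    limFun f x = a :=
  ((continuous_coe_real_ereal.tendsto a).comp h).limsup_eq

theorem limFun_eq_of_notMem_badSet {n : ℕ} {x : P} (hx : x ∉ badSet u f n) :
    limFun f x = u x := by
  obtain ⟨a, ha, hk⟩ := not_not.1 hx
  rw [ha]
  apply limFun_eq_of_tendsto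
  rw [tendsto_iff_dist_tendsto_zero]
  refine squeeze_zero' (Eventually.of_forall fun _ => dist_nonneg) ?_
    (tendsto_pow_atTop_nhds_zero_of_lt_one (r := (1 / 2 : ℝ)) (by norm_num) (by norm_num))
  filter_upwards [eventually_ge_atTop n] with k hkn
  rw [dist_comm]
  exact hk k hkn

theorem limFun_regular_off_jumpSet (hf : ∀ k, Continuous (f k)) (n : ℕ) :
    (∀ x ∈ (jumpSet f n)ᶜ, limFun f x ≠ ⊤ ∧ limFun f x ≠ ⊥) ∧
      ContinuousOn (limFun f) (jumpSet f n)ᶜ := by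
  have hstep : ∀ x ∈ (jumpSet f n)ᶜ, ∀ j : ℕ,
      dist (f (n + j) x) (f (n + (j + 1)) x) ≤ 4 * (1 / 2) ^ n / 2 / 2 ^ j := by
    intro x hx j
    have h1 : |f (n + j + 1) x - f (n + j) x| ≤ 2 * (1 / 2) ^ (n + j) := by
      by_contra h
      exact hx ⟨n + j, by omega, not_le.1 h⟩
    rw [dist_comm, Real.dist_eq, ← add_assoc]
    refine h1.trans (le_of_eq ?_)
    rw [pow_add, one_div, inv_pow, inv_pow]
    field_simp
    norm_num
  have hlim : ∀ x ∈ (jumpSet f n)ᶜ, ∃ a : ℝ, Tendsto (fun j => f (n + j) x) atTop (𝓝 a) :=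
    fun x hx => cauchySeq_tendsto_of_complete (cauchySeq_of_le_geometric_two (hstep x hx))
  choose! F hF using hlim
  have heq : ∀ x ∈ (jumpSet f n)ᶜ, limFun f x = (F x : EReal) := by
    intro x hx
    apply limFun_eq_of_tendsto
    have h := hF x hx
    simp only [add_comm n] at h
    exact (tendsto_add_atTop_iff_nat n).1 h
  have hcont : ContinuousOn F (jumpSet f n)ᶜ := by
    have hunif : TendstoUniformlyOn (fun j => f (n + j)) F atTop (jumpSet f n)ᶜ := by
      rw [Metric.tendstoUniformlyOn_iff]
      intro ε hε
      have h0 : Tendsto (fun j : ℕ => 4 * (1 / 2 : ℝ) ^ n / 2 ^ j) atTop (𝓝 0) :=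
        tendsto_const_nhds.div_atTop (tendsto_pow_atTop_atTop_of_one_lt (by norm_num))
      filter_upwards [h0.eventually (gt_mem_nhds hε)] with j hj x hx
      rw [dist_comm]
      exact (dist_le_of_le_geometric_two_of_tendsto (hstep x hx) (hF x hx) j).trans_lt hj
    exact hunif.continuousOn (Frequently.of_forall fun j => (hf (n + j)).continuousOn)
  refine ⟨fun x hx => by simp [heq x hx], ?_⟩
  exact (continuous_coe_real_ereal.comp_continuousOn hcont).congr heq

end Sets

/-! ### Capacity of the exceptional sets and the upper gradient of the limit -/

section Main

variable {u : P → EReal} {f : ℕ → P → ℝ} {g : ℕ → P → ℝ≥0∞}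

/-- The weighted tail `∑_{k ≥ n} 4ᵏ h k`. -/
def wtail (h : ℕ → P → ℝ≥0∞) (n : ℕ) (x : P) : ℝ≥0∞ := ∑' j, 4 ^ (n + j) * h (n + j) x

theorem le_wtail (h : ℕ → P → ℝ≥0∞) {n k : ℕ} (hk : n ≤ k) (x : P) :
    4 ^ k * h k x ≤ wtail h n x := by
  obtain ⟨j, rfl⟩ := Nat.exists_eq_add_of_le hk
  exact ENNReal.le_tsum j

theorem measurable_wtail {h : ℕ → P → ℝ≥0∞} (hh : ∀ k, Measurable (h k)) (n : ℕ) :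
    Measurable (wtail h n) :=
  Measurable.tsum fun j => (hh (n + j)).const_mul _

theorem four_pow_mul_abs_le
    (hg : ∀ k, IsUpperGradient (fun x => u x - (f k x : EReal)) (g k)) {n k : ℕ} (hk : n ≤ k)
    (γ : Curve P) :
    4 ^ k * (u (γ.toFun 0) - (f k (γ.toFun 0) : EReal)).abs ≤
      4 ^ k * (u (γ.toFun γ.len) - (f k (γ.toFun γ.len) : EReal)).abs +
        curveLint γ (wtail g n) := by
  calc _ ≤ 4 ^ k * ((u (γ.toFun γ.len) - (f k (γ.toFun γ.len) : EReal)).abs +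
          curveLint γ (g k)) := by
        gcongr
        exact (ereal_abs_le_add_abs_sub _ _).trans (add_le_add le_rfl ((hg k).2 γ))
    _ ≤ _ := by
        rw [mul_add]
        gcongr
        exact (mul_curveLint_le γ _ _).trans (curveLint_mono γ fun x => le_wtail g hk x)

theorem QBFL.cap_badSet_le (X : QBFL P μ)
    (hv : ∀ k, Measurable fun x => u x - (f k x : EReal))
    (hvn : ∀ k, X.nrm (fun x => u x - (f k x : EReal)) ≤ X.err k)
    (hg : ∀ k, IsUpperGradient (fun x => u x - (f k x : EReal)) (g k))
    (hgn : ∀ k, X.nrmE (g k) ≤ X.err k) (n : ℕ) :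
    X.cap (badSet u f n) ≤ 2⁻¹ ^ n + 2⁻¹ ^ n := by
  let v : ℕ → P → ℝ≥0∞ := fun k x => (u x - (f k x : EReal)).abs
  have hvm : ∀ k, Measurable (v k) := fun k => measurable_ereal_abs.comp (hv k)
  let w : P → ℝ≥0∞ := fun x => min 1 (⨆ j, 4 ^ (n + j) * v (n + j) x)
  have hwm : Measurable w :=
    measurable_const.min (Measurable.iSup fun j => (hvm (n + j)).const_mul _)
  have hosc : ∀ γ : Curve P, w (γ.toFun 0) ≤ w (γ.toFun γ.len) + curveLint γ (wtail g n) := by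
    intro γ
    have h : (⨆ j, 4 ^ (n + j) * v (n + j) (γ.toFun 0)) ≤
        (⨆ j, 4 ^ (n + j) * v (n + j) (γ.toFun γ.len)) + curveLint γ (wtail g n) := by
      refine iSup_le fun j => (four_pow_mul_abs_le hg (Nat.le_add_right n j) γ).trans ?_
      gcongr
      exact le_iSup (fun j => 4 ^ (n + j) * v (n + j) (γ.toFun γ.len)) j
    rw [min_add]
    exact min_le_min le_self_add h
  have hug : IsUpperGradient (fun x => (w x : EReal)) (wtail g n) := by
    refine ⟨measurable_wtail (fun k => (hg k).1) n, fun γ => ?_⟩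
    refine ereal_abs_coe_sub_coe_le (min_le_left _ _) (min_le_left _ _) (hosc γ) ?_
    have h := hosc γ.reverse
    rw [curveLint_reverse] at h
    simpa [Curve.reverse] using h
  have hwn : X.nrm (fun x => (w x : EReal)) ≤ 2⁻¹ ^ n := by
    refine le_trans ?_ (X.nrmE_tail_le v (fun k => by rw [X.nrmE_abs]; exact hvn k) n)
    refine X.nrmE_mono (Eventually.of_forall fun x => (min_le_right _ _).trans ?_)
    exact iSup_le fun j => ENNReal.le_tsum j
  have hnewt : X.newt (fun x => (w x : EReal)) ≤ 2⁻¹ ^ n + 2⁻¹ ^ n :=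
    (X.newt_le hug).trans (add_le_add hwn (X.nrmE_tail_le g hgn n))
  refine le_trans (biInf_le _ ⟨⟨measurable_coe_ennreal_ereal.comp hwm, ?_⟩, ?_⟩) hnewt
  · refine hnewt.trans_lt ?_
    simp [ENNReal.add_lt_top]
  · intro x hx
    obtain ⟨k, hk, hle⟩ := exists_le_of_mem_badSet hx
    obtain ⟨j, rfl⟩ := Nat.exists_eq_add_of_le hk
    have h1 : (1 : ℝ≥0∞) ≤ w x := by
      refine le_min le_rfl (le_trans ?_ (le_iSup (fun j => 4 ^ (n + j) * v (n + j) x) j))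
      exact (one_le_pow₀ (by norm_num)).trans hle
    change ((1 : ℝ≥0∞) : EReal) ≤ ((w x : ℝ≥0∞) : EReal)
    exact EReal.coe_ennreal_le_coe_ennreal_iff.2 h1

/-- A curve starting in `⋂ n, badSet u f n` has infinite integral of any function that dominates
`∑ 4ᵏ g k` and is infinite where `∑ 4ᵏ |u - f k|` is. -/
theorem curveLint_eq_top_of_mem_badSet
    (hg : ∀ k, IsUpperGradient (fun x => u x - (f k x : EReal)) (g k))
    {ρ : P → ℝ≥0∞} (hρ : ∀ x, wtail g 0 x ≤ ρ x)
    (hρtop : ∀ x, wtail (fun k x => (u x - (f k x : EReal)).abs) 0 x = ⊤ → ρ x = ⊤)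
    (γ : Curve P) (hx : ∀ n, γ.toFun 0 ∈ badSet u f n) : curveLint γ ρ = ⊤ := by
  by_cases hex : ∃ t ∈ Ioo 0 γ.len,
      wtail (fun k x => (u x - (f k x : EReal)).abs) 0 (γ.toFun t) ≠ ⊤
  · obtain ⟨t, ht, hfin⟩ := hex
    let γ' := γ.initial t ht.1 ht.2.le
    have hsub : curveLint γ' (wtail g 0) ≤ curveLint γ ρ :=
      (lintegral_mono_set (Icc_subset_Icc le_rfl ht.2.le)).trans (curveLint_mono γ hρ)
    have hbig : ∀ n : ℕ, (n : ℝ≥0∞) ≤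
        wtail (fun k x => (u x - (f k x : EReal)).abs) 0 (γ.toFun t) + curveLint γ ρ := by
      intro n
      obtain ⟨k, hk, hle⟩ := exists_le_of_mem_badSet (hx n)
      have hn : (n : ℝ≥0∞) ≤ 2 ^ k := by
        have : n ≤ 2 ^ k := hk.trans Nat.lt_two_pow_self.le
        exact_mod_cast this
      refine hn.trans (hle.trans ((four_pow_mul_abs_le hg (Nat.zero_le k) γ').trans ?_))
      exact add_le_add
        (le_wtail (fun k x => (u x - (f k x : EReal)).abs) (Nat.zero_le k) (γ.toFun t)) hsub
    by_contra hne
    obtain ⟨n, hn⟩ := ENNReal.exists_nat_gt (ENNReal.add_ne_top.2 ⟨hfin, hne⟩)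
    exact absurd (hbig n) (not_le.2 hn)
  · push Not at hex
    rw [eq_top_iff]
    calc (⊤ : ℝ≥0∞) = ∫⁻ _ in Ioo 0 γ.len, (⊤ : ℝ≥0∞) := by
          rw [setLIntegral_const, Real.volume_Ioo, ENNReal.top_mul]
          simpa using γ.len_pos
      _ = ∫⁻ t in Ioo 0 γ.len, ρ (γ.toFun t) :=
          setLIntegral_congr_fun measurableSet_Ioo fun t ht => (hρtop _ (hex t ht)).symm
      _ ≤ curveLint γ ρ := lintegral_mono_set Ioo_subset_Icc_self

theorem QBFL.memN1_limFun (X : QBFL P μ) (hu : X.memN1 u) (hfm : ∀ k, Measurable (f k))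
    (hv : ∀ k, Measurable fun x => u x - (f k x : EReal))
    (hvn : ∀ k, X.nrm (fun x => u x - (f k x : EReal)) ≤ X.err k)
    (hg : ∀ k, IsUpperGradient (fun x => u x - (f k x : EReal)) (g k))
    (hgn : ∀ k, X.nrmE (g k) ≤ X.err k) : X.memN1 (limFun f) := by
  classical
  let v : ℕ → P → ℝ≥0∞ := fun k x => (u x - (f k x : EReal)).abs
  have hTm : Measurable (wtail v 0) :=
    measurable_wtail (fun k => measurable_ereal_abs.comp (hv k)) 0
  have hTn : X.nrmE (wtail v 0) < ⊤ :=
    (X.nrmE_tail_le v (fun k => by rw [X.nrmE_abs]; exact hvn k) 0).trans_lt (by simp)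
  have hTae := X.ae_ne_top hTm hTn
  have hRn : X.nrmE (wtail g 0) < ⊤ := (X.nrmE_tail_le g hgn 0).trans_lt (by simp)
  obtain ⟨hun, g₀, hg₀, hg₀n⟩ := X.exists_upperGradient_lt hu.2
  let ρ : P → ℝ≥0∞ := fun x => if wtail v 0 x = ⊤ then ⊤ else g₀ x + wtail g 0 x
  have hρge : ∀ x, g₀ x + wtail g 0 x ≤ ρ x := by
    intro x
    by_cases h : wtail v 0 x = ⊤ <;> simp [ρ, h]
  have htop : ∀ x, (∀ n, x ∈ badSet u f n) → wtail v 0 x = ⊤ := by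
    intro x hx
    by_contra hne
    obtain ⟨n, hn⟩ := ENNReal.exists_nat_gt hne
    obtain ⟨k, hk, hle⟩ := exists_le_of_mem_badSet (hx n)
    have h1 : (n : ℝ≥0∞) ≤ 2 ^ k := by
      have : n ≤ 2 ^ k := hk.trans Nat.lt_two_pow_self.le
      exact_mod_cast this
    exact absurd ((h1.trans hle).trans (le_wtail v (Nat.zero_le k) x)) (not_le.2 hn)
  have hug : IsUpperGradient (limFun f) ρ := by
    refine ⟨Measurable.ite (hTm (measurableSet_singleton ⊤)) measurable_const
      (hg₀.1.add (measurable_wtail (fun k => (hg k).1) 0)), fun γ => ?_⟩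
    have hinf : ∀ γ : Curve P, (∀ n, γ.toFun 0 ∈ badSet u f n) → curveLint γ ρ = ⊤ :=
      fun γ hx => curveLint_eq_top_of_mem_badSet hg (fun x => le_add_self.trans (hρge x))
        (fun x h => if_pos h) γ hx
    by_cases h0 : ∀ n, γ.toFun 0 ∈ badSet u f n
    · rw [hinf γ h0]; exact le_top
    by_cases h1 : ∀ n, γ.toFun γ.len ∈ badSet u f n
    · rw [← curveLint_reverse, hinf γ.reverse (by simpa [Curve.reverse] using h1)]
      exact le_top
    push Not at h0 h1
    obtain ⟨n, hn⟩ := h0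
    obtain ⟨m, hm⟩ := h1
    rw [limFun_eq_of_notMem_badSet hn, limFun_eq_of_notMem_badSet hm]
    exact (hg₀.2 γ).trans (curveLint_mono γ fun x => le_self_add.trans (hρge x))
  have hρn : X.nrmE ρ < ⊤ := by
    have h1 : X.nrmE ρ ≤ X.nrmE (fun x => g₀ x + wtail g 0 x) := by
      apply X.nrmE_mono
      filter_upwards [hTae] with x hx
      simp [ρ, hx]
    have h2 : X.nrmE (fun x => g₀ x + wtail g 0 x) ≤
        X.cc * (X.nrmE g₀ + X.nrmE (wtail g 0)) := by
      unfold QBFL.nrmE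
      simpa only [EReal.coe_ennreal_add] using
        X.nrm_triangle (fun x => (g₀ x : EReal)) (fun x => (wtail g 0 x : EReal))
    exact (h1.trans h2).trans_lt
      (ENNReal.mul_lt_top X.cc_lt_top (ENNReal.add_lt_top.2 ⟨hg₀n, hRn⟩))
  have hnrm : X.nrm (limFun f) ≤ X.nrm u := by
    apply X.nrm_mono
    filter_upwards [hTae] with x hx
    have : ¬ ∀ n, x ∈ badSet u f n := fun h => hx (htop x h)
    push Not at this
    obtain ⟨n, hn⟩ := this
    rw [limFun_eq_of_notMem_badSet hn]
  refine ⟨Measurable.limsup fun k => measurable_coe_real_ereal.comp (hfm k), ?_⟩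
  exact (X.newt_le hug).trans_lt (ENNReal.add_lt_top.2 ⟨hnrm.trans_lt hun, hρn⟩)

end Main

/-- If continuous (real-valued) functions are dense in `N¹X`, then every
`u ∈ N¹X` has a quasi-continuous representative `ũ = u` q.e.; in particular every `u ∈ N¹X`
is weakly quasi-continuous. -/
theorem newtonian_has_qc_representative
    {P : Type*} [MetricSpace P] [MeasurableSpace P] [BorelSpace P]
    (μ : MeasureTheory.Measure P) [SigmaFinite μ]
    (hball : ∀ (x : P) (r : ℝ), 0 < r → 0 < μ (Metric.ball x r) ∧ μ (Metric.ball x r) < ⊤)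
    (X : QBFL P μ)
    (hdens : ∀ u : P → EReal, X.memN1 u → ∀ ε : ℝ≥0∞, 0 < ε →
      ∃ f : P → ℝ, Continuous f ∧ X.newt (fun x => u x - (f x : EReal)) < ε)
    (u : P → EReal) (hu : X.memN1 u) :
    (∃ ut : P → EReal, X.memN1 ut ∧ X.QC ut ∧ X.cap {x | ut x ≠ u x} = 0) ∧
      X.WeaklyQC u := by
  choose f hfc hfn using fun k => hdens u hu (X.err k) (X.err_pos k)
  have hfm : ∀ k, Measurable (f k) := fun k => (hfc k).measurable
  have hv : ∀ k, Measurable fun x => u x - (f k x : EReal) := by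
    intro k
    simp only [sub_eq_add_neg]
    exact hu.1.add (measurable_coe_real_ereal.comp (hfm k)).neg
  have hvn : ∀ k, X.nrm (fun x => u x - (f k x : EReal)) ≤ X.err k :=
    fun k => (X.exists_upperGradient_lt (hfn k)).1.le
  choose g hg hgn using fun k => (X.exists_upperGradient_lt (hfn k)).2
  have hcap := X.cap_badSet_le hv hvn hg fun k => (hgn k).le
  have hsmall : ∀ ε : ℝ≥0∞, 0 < ε → ∃ n, X.cap (badSet u f n) < ε := by
    intro ε hε
    have h0 : Tendsto (fun n : ℕ => (2⁻¹ : ℝ≥0∞) ^ n + 2⁻¹ ^ n) atTop (𝓝 (0 + 0)) := by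
      have h := ENNReal.tendsto_pow_atTop_nhds_zero_of_lt_one (r := 2⁻¹) (by simp)
      exact h.add h
    rw [add_zero] at h0
    obtain ⟨n, hn⟩ := (h0.eventually (gt_mem_nhds hε)).exists
    exact ⟨n, (hcap n).trans_lt hn⟩
  refine ⟨⟨limFun f, X.memN1_limFun hu hfm hv hvn hg fun k => (hgn k).le, ?_, ?_⟩, ?_⟩
  · intro ε hε
    obtain ⟨n, hn⟩ := hsmall ε hε
    exact ⟨jumpSet f n, isOpen_jumpSet hfc n,
      (X.cap_mono (jumpSet_subset_badSet n)).trans_lt hn, limFun_regular_off_jumpSet hfc n⟩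
  · by_contra hne
    obtain ⟨n, hn⟩ := hsmall _ (pos_iff_ne_zero.2 hne)
    refine absurd (X.cap_mono fun x hx => ?_) (not_le.2 hn)
    by_contra hxn
    exact hx (limFun_eq_of_notMem_badSet hxn)
  · intro ε hε
    obtain ⟨n, hn⟩ := hsmall ε hε
    have hsub : (badSet u f n)ᶜ ⊆ (jumpSet f n)ᶜ :=
      compl_subset_compl.2 (jumpSet_subset_badSet n)
    have heq : ∀ x ∈ (badSet u f n)ᶜ, u x = limFun f x :=
      fun x hx => (limFun_eq_of_notMem_badSet hx).symm
    obtain ⟨h1, h2⟩ := limFun_regular_off_jumpSet hfc n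
    refine ⟨badSet u f n, hn, fun x hx => ?_, (h2.mono hsub).congr heq⟩
    rw [heq x hx]
    exact h1 x (hsub hx)

end
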